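/- Let t ≥ 3 be an integer and let G be a simple planar graph with at least t+1 edges. Let H be the subgraph of G induced by the triangles of G, i.e., H consists of all edges of G that lie in some triangle (3-cycle) of G. Assume H can be written as a union H = ⋃_i H_i of subgraphs such that every triangle of G is contained in some H_i, the H_i are pairwise edge-disjoint, and every H_i has at least 3 and at most t edges. Then the number e(G) of edges and the number v(G) of vertices of G satisfy e(G) ≤ (12t/(4t+3)) · (v(G) − 2). -/

import Mathlib

/-- A crossing-free drawing of the graph `G` inside the subset `S` of the topological
space `X`: vertices are mapped to pairwise distinct points, every edge is realized by
an arc (the image of an injective path) between the points of its endpoints, all arcs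
lie in `S`, arcs meet the vertex points only at their own endpoints, and interiors of
arcs of distinct edges are pairwise disjoint. -/
def IsCrossingFreeDrawingIn {V X : Type*} [TopologicalSpace X] (G : SimpleGraph V)
    (f : V → X) (arc : Sym2 V → Set X) (S : Set X) : Prop :=
  Function.Injective f ∧
  (∀ u v : V, G.Adj u v →
    ∃ γ : Path (f u) (f v), Function.Injective ⇑γ ∧ Set.range ⇑γ = arc s(u, v)) ∧
  (∀ e ∈ G.edgeSet, arc e ⊆ S) ∧
  (∀ e ∈ G.edgeSet, ∀ w : V, f w ∈ arc e → w ∈ e) ∧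
  (∀ e ∈ G.edgeSet, ∀ e' ∈ G.edgeSet, e ≠ e' →
    (arc e \ f '' {x | x ∈ e}) ∩ (arc e' \ f '' {x | x ∈ e'}) = ∅)

/-- A graph is planar if it admits a crossing-free drawing in `ℝ²`. -/
def IsPlanar {V : Type*} (G : SimpleGraph V) : Prop :=
  ∃ (f : V → EuclideanSpace ℝ (Fin 2)) (arc : Sym2 V → Set (EuclideanSpace ℝ (Fin 2))),
    IsCrossingFreeDrawingIn G f arc Set.univ

/-!
Enlarge the vertices of a crossing-free drawing to small discs and cut the arcs off at them, then
replace every piece by its trace on a fine square lattice. This exhibits `G` as a minor, with finite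
branch sets, of the square grid. The grid has an algebraic dual: by the discrete Poincaré lemma, its
finite cycles mod 2 are the cuts of the graph of unit squares. Deletion and contraction transfer
such a dual to minors, so `G` has one; comparing ranks gives the Euler inequality
`e + 2 ≤ v + f`, where `f` is the number of vertices (the faces) of a connected dual.

Nonempty cuts of the dual are cycles of `G`, so they have at least three edges, and the three edges
at a face of degree three form a triangle and lie in one block. If `s` faces of degree three lie in
a block with `a ≤ t` edges, then their edge count plus the cut around their union is at most `2a`,
whence `3s + 3 ≤ 2a` if `s > 0`. Summing over the blocks bounds the number `f₃` of faces of degree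
three by `3t f₃ ≤ (2t - 3) e`, and `4f ≤ 2e + f₃` together with the Euler inequality finishes the
proof.
-/

universe u

section CutSpace

variable {V W E F : Type*}

/-- The mod 2 coboundary operator of the multigraph with edge set `E` and vertex set `V` in which
`e` joins the two components of `ends e`: it sends a set of vertices to the set of edges leaving
it. Loops and parallel edges are allowed, and the orientation of the edges is immaterial. -/
def coboundary (ends : E → V × V) : (V → ZMod 2) →ₗ[ZMod 2] E → ZMod 2 :=
  LinearMap.funLeft _ _ (Prod.fst ∘ ends) + LinearMap.funLeft _ _ (Prod.snd ∘ ends)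

@[simp]
theorem coboundary_apply (ends : E → V × V) (x : V → ZMod 2) (e : E) :
    coboundary ends x e = x (ends e).1 + x (ends e).2 :=
  rfl

theorem coboundary_map_comp (ends : E → V × V) (f : V → W) :
    coboundary (Prod.map f f ∘ ends) = coboundary ends ∘ₗ LinearMap.funLeft _ _ f :=
  rfl

theorem coboundary_const (ends : E → V × V) (c : ZMod 2) :
    coboundary ends (Function.const V c) = 0 :=
  funext fun _ => CharTwo.add_self_eq_zero c

/-- The cut space of a multigraph: the edge sets, as vectors mod 2, that separate some set of
vertices from its complement. -/
def cutSpace (ends : E → V × V) : Submodule (ZMod 2) (E → ZMod 2) :=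
  LinearMap.range (coboundary ends)

theorem cutSpace_map_comp (ends : E → V × V) {f : V → W} (hf : Function.Injective f) :
    cutSpace (Prod.map f f ∘ ends) = cutSpace ends := by
  rw [cutSpace, coboundary_map_comp]
  exact LinearMap.range_comp_of_range_eq_top _ <| LinearMap.range_eq_top.2 <|
    LinearMap.funLeft_surjective_of_injective _ _ f hf

theorem finrank_cutSpace_lt [Fintype V] [Nonempty V] (ends : E → V × V) :
    Module.finrank (ZMod 2) (cutSpace ends) < Fintype.card V := by
  have hker : LinearMap.ker (coboundary ends) ≠ ⊥ := fun h =>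
    one_ne_zero <| congrFun (LinearMap.ker_eq_bot'.1 h _ (coboundary_const ends 1))
      (Classical.arbitrary V)
  have hpos := Submodule.one_le_finrank_iff.2 hker
  have hrank := (coboundary ends).finrank_range_add_finrank_ker
  rw [Module.finrank_fintype_fun_eq_card] at hrank
  rw [cutSpace]
  lia

/-- A multigraph is connected if every cut separating two of its vertices is nonempty. -/
def IsConnectedMultigraph (ends : E → V × V) : Prop :=
  ∀ x, coboundary ends x = 0 → ∀ u v, x u = x v

/-- Identifying two vertices of different components does not change the cuts. -/
theorem exists_cutSpace_eq_of_not_connected {ends : E → V × V}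
    (h : ¬IsConnectedMultigraph ends) :
    ∃ (a : V) (ends' : E → {v // v ≠ a} × {v // v ≠ a}),
      Nonempty {v // v ≠ a} ∧ cutSpace ends' = cutSpace ends := by
  classical
  simp only [IsConnectedMultigraph, not_forall] at h
  obtain ⟨x, hx, a, b, hab⟩ := h
  have hba : b ≠ a := fun h => hab (by rw [h])
  let π (v : V) : {v // v ≠ a} := if h : v = a then ⟨b, hba⟩ else ⟨v, h⟩
  refine ⟨a, Prod.map π π ∘ ends, ⟨⟨b, hba⟩⟩, le_antisymm ?_ ?_⟩
  · rw [cutSpace, coboundary_map_comp]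
    exact LinearMap.range_comp_le_range _ _
  · rintro _ ⟨y, rfl⟩
    let y' : V → ZMod 2 := y + (y a + y b) • x
    have hy' : y' a = y' b :=
      have key : ∀ p q r s : ZMod 2, p ≠ q → r + (r + s) * p = s + (r + s) * q := by decide
      key _ _ _ _ hab
    have hfactor : (fun v : {v // v ≠ a} => y' v) ∘ π = y' := by
      funext v
      by_cases hv : v = a
      · simp [π, hv, hy']
      · simp [π, hv]
    refine ⟨fun v => y' v, ?_⟩
    calc coboundary (Prod.map π π ∘ ends) (fun v => y' v)
        = coboundary ends ((fun v : {v // v ≠ a} => y' v) ∘ π) := rfl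
      _ = coboundary ends y := by rw [hfactor, map_add, map_smul, hx, smul_zero, add_zero]

variable [Fintype E]

open Classical in
/-- The cycle space of a multigraph: the edge sets, as vectors mod 2, that meet every cut in an
even number of edges; equivalently, those in which all degrees are even. -/
noncomputable def cycleSpace (ends : E → V × V) : Submodule (ZMod 2) (E → ZMod 2) :=
  (cutSpace ends).dualAnnihilator.comap (dotProductEquiv (ZMod 2) E).toLinearMap

theorem mem_cycleSpace {ends : E → V × V} {z : E → ZMod 2} :
    z ∈ cycleSpace ends ↔ ∀ x, z ⬝ᵥ coboundary ends x = 0 := by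
  simp [cycleSpace, cutSpace, Submodule.mem_dualAnnihilator]

theorem finrank_cycleSpace_add_finrank_cutSpace (ends : E → V × V) :
    Module.finrank (ZMod 2) (cycleSpace ends) + Module.finrank (ZMod 2) (cutSpace ends) =
      Fintype.card E := by
  classical
  rw [cycleSpace, Submodule.comap_equiv_eq_map_symm, LinearEquiv.finrank_map_eq, add_comm,
    Subspace.finrank_add_finrank_dualAnnihilator_eq, Module.finrank_fintype_fun_eq_card]

theorem mem_cycleSpace_iff_forall_single [DecidableEq V] {ends : E → V × V} {z : E → ZMod 2} :
    z ∈ cycleSpace ends ↔ ∀ v, z ⬝ᵥ coboundary ends (Pi.single v 1) = 0 := by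
  refine ⟨fun hz v => mem_cycleSpace.1 hz _, fun hz => mem_cycleSpace.2 fun x => ?_⟩
  let S : Finset V := Finset.univ.image (Prod.fst ∘ ends) ∪ Finset.univ.image (Prod.snd ∘ ends)
  have hx (v : V) (hv : v ∈ S) : (∑ w ∈ S, x w • Pi.single w (1 : ZMod 2)) v = x v := by
    simp [Finset.sum_apply, Pi.single_apply, hv]
  have hcongr : coboundary ends x = coboundary ends (∑ w ∈ S, x w • Pi.single w 1) :=
    funext fun e => by rw [coboundary_apply, coboundary_apply, hx, hx] <;> simp [S]
  rw [hcongr, map_sum, dotProduct_sum]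
  exact Finset.sum_eq_zero fun v _ => by rw [map_smul, dotProduct_smul, hz, smul_zero]

/-- The multigraph `dual`, on the same edge set, is an algebraic dual of the multigraph `ends`:
its cuts are the cycles of `ends`. This is MacLane's algebraic form of planar duality, in which
the vertices of `dual` play the role of faces. -/
def IsDual (ends : E → V × V) (dual : E → F × F) : Prop :=
  cutSpace dual = cycleSpace ends

theorem IsDual.card_add_two_le [Fintype V] [Nonempty V] [Fintype F] [Nonempty F]
    {ends : E → V × V} {dual : E → F × F} (h : IsDual ends dual) :
    Fintype.card E + 2 ≤ Fintype.card V + Fintype.card F := by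
  have hcut := finrank_cutSpace_lt ends
  have hdual := finrank_cutSpace_lt dual
  have hsum := finrank_cycleSpace_add_finrank_cutSpace ends
  rw [h] at hdual
  lia

end CutSpace

theorem IsDual.exists_connected {V E : Type*} {F : Type u} [Fintype E] [Finite F] [Nonempty F]
    {ends : E → V × V} {dual : E → F × F} (h : IsDual ends dual) :
    ∃ (F' : Type u) (_ : Finite F') (_ : Nonempty F') (dual' : E → F' × F'),
      IsDual ends dual' ∧ IsConnectedMultigraph dual' := by
  induction hn : Nat.card F using Nat.strong_induction_on generalizing F with
  | _ n ih =>
    by_cases hconn : IsConnectedMultigraph dual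
    · exact ⟨F, ‹_›, ‹_›, dual, h, hconn⟩
    obtain ⟨a, dual', hne, hcut⟩ := exists_cutSpace_eq_of_not_connected hconn
    have hcard : Nat.card {c // c ≠ a} < n := hn ▸ Finite.card_subtype_lt (not_not.2 rfl)
    exact ih _ hcard (hcut.trans h) rfl

section Contraction

variable {V W E F I : Type*}

theorem mem_cutSpace_comp_inl {dual : E ⊕ I → F × F} {z : E → ZMod 2} :
    z ∈ cutSpace (dual ∘ Sum.inl) ↔ ∃ τ, Sum.elim z τ ∈ cutSpace dual := by
  constructor
  · rintro ⟨y, rfl⟩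
    exact ⟨coboundary (dual ∘ Sum.inr) y, y, (Sum.elim_comp_inl_inr (coboundary dual y)).symm⟩
  · rintro ⟨τ, y, hy⟩
    exact ⟨y, congrArg (· ∘ Sum.inl) hy⟩

variable [Fintype I]

theorem exists_dotProduct_eq_iff {K M : Type*} [Field K] [AddCommGroup M] [Module K M]
    {f : M →ₗ[K] I → K} {φ : Module.Dual K M} :
    (∃ τ, ∀ x, τ ⬝ᵥ f x = φ x) ↔ ∀ x ∈ LinearMap.ker f, φ x = 0 := by
  classical
  rw [← Submodule.mem_dualAnnihilator, ← LinearMap.range_dualMap_eq_dualAnnihilator_ker,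
    LinearMap.mem_range, (dotProductEquiv K I).surjective.exists]
  simp [LinearMap.ext_iff]

variable [Fintype E]

theorem sumElim_mem_cycleSpace {ends : E → W × W} {inner : I → W × W} {z : E → ZMod 2}
    {τ : I → ZMod 2} :
    Sum.elim z τ ∈ cycleSpace (Sum.elim ends inner) ↔
      ∀ x, τ ⬝ᵥ coboundary inner x = z ⬝ᵥ coboundary ends x := by
  refine mem_cycleSpace.trans <| forall_congr' fun x => ?_
  have hsplit : Sum.elim z τ ⬝ᵥ coboundary (Sum.elim ends inner) x =
      z ⬝ᵥ coboundary ends x + τ ⬝ᵥ coboundary inner x := by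
    simp [dotProduct]
  rw [hsplit, CharTwo.add_eq_zero, eq_comm]

/-- Deleting edges of the dual contracts edges of the primal: the hypothesis says that `endsV`
results from contracting the components formed by the edges `inner`. -/
theorem IsDual.contract {ends : E → W × W} {inner : I → W × W} {dual : E ⊕ I → F × F}
    (h : IsDual (Sum.elim ends inner) dual) {endsV : E → V × V}
    (hcontract : (LinearMap.ker (coboundary inner)).map (coboundary ends) = cutSpace endsV) :
    IsDual endsV (dual ∘ Sum.inl) := by
  classical
  ext z
  calc z ∈ cutSpace (dual ∘ Sum.inl)
      ↔ ∃ τ, Sum.elim z τ ∈ cycleSpace (Sum.elim ends inner) := by rw [mem_cutSpace_comp_inl, h]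
    _ ↔ ∃ τ, ∀ x, τ ⬝ᵥ coboundary inner x =
          ((dotProductEquiv (ZMod 2) E z).comp (coboundary ends)) x :=
        exists_congr fun _ => sumElim_mem_cycleSpace
    _ ↔ ∀ x ∈ LinearMap.ker (coboundary inner), z ⬝ᵥ coboundary ends x = 0 :=
        exists_dotProduct_eq_iff
    _ ↔ ∀ y ∈ cutSpace endsV, z ⬝ᵥ y = 0 := by
        simp [← hcontract, Submodule.mem_map]
    _ ↔ z ∈ cycleSpace endsV := Set.forall_mem_range.trans mem_cycleSpace.symm

end Contraction

section Restriction

variable {V E E' F : Type*}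

theorem exists_finite_cutSpace_eq [Finite E] [Nonempty V] (ends : E → V × V) :
    ∃ (S : Set V) (_ : Finite S) (_ : Nonempty S) (ends' : E → S × S),
      cutSpace ends' = cutSpace ends := by
  obtain ⟨v⟩ := ‹Nonempty V›
  let S : Set V := insert v (Set.range (Prod.fst ∘ ends) ∪ Set.range (Prod.snd ∘ ends))
  refine ⟨S, (Set.Finite.insert _ ((Set.finite_range _).union (Set.finite_range _))).to_subtype,
    ⟨v, .inl rfl⟩,
    fun e => (⟨(ends e).1, .inr (.inl ⟨e, rfl⟩)⟩, ⟨(ends e).2, .inr (.inr ⟨e, rfl⟩)⟩), ?_⟩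
  exact (cutSpace_map_comp _ Subtype.val_injective).symm

/-- Deleting edges of the primal contracts edges of the dual. -/
theorem extend_mem_cutSpace_iff {j : E → E'} (hj : Function.Injective j) {dual : E' → F × F}
    {z : E → ZMod 2} :
    let deleted : F → F → Prop := fun a b => ∃ e ∉ Set.range j, dual e = (a, b)
    Function.extend j z 0 ∈ cutSpace dual ↔
      z ∈ cutSpace (Prod.map (Quot.mk deleted) (Quot.mk deleted) ∘ dual ∘ j) := by
  intro deleted
  constructor
  · rintro ⟨y, hy⟩
    have hinv (a b : F) (hab : deleted a b) : y a = y b := by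
      obtain ⟨e, he, hends⟩ := hab
      have := congrFun hy e
      rw [coboundary_apply, hends, Function.extend_apply' _ _ _ he] at this
      exact CharTwo.add_eq_zero.1 this
    exact ⟨Quot.lift y hinv, funext fun e => (congrFun hy (j e)).trans (hj.extend_apply z 0 e)⟩
  · rintro ⟨y, rfl⟩
    refine ⟨y ∘ Quot.mk deleted, funext fun e => ?_⟩
    by_cases he : e ∈ Set.range j
    · obtain ⟨e, rfl⟩ := he
      rw [hj.extend_apply]
      rfl
    · rw [Function.extend_apply' _ _ _ he, coboundary_apply]
      exact CharTwo.add_eq_zero.2 (congrArg y (Quot.sound ⟨e, he, rfl⟩))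

theorem sum_mul_single_comp [Fintype E] [DecidableEq E'] {R : Type*} [Semiring R] {j : E → E'}
    (hj : Function.Injective j) (z : E → R) (x : E') :
    ∑ e, z e * (Pi.single x 1 : E' → R) (j e) = Function.extend j z 0 x := by
  classical
  by_cases hx : x ∈ Set.range j
  · obtain ⟨e, rfl⟩ := hx
    simp [hj.extend_apply, Pi.single_apply, hj.eq_iff]
  · rw [Function.extend_apply' _ _ _ hx]
    refine Finset.sum_eq_zero fun e _ => ?_
    rw [Pi.single_eq_of_ne (fun h => hx ⟨e, h⟩), mul_zero]

end Restriction

section Grid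

theorem exists_antidifference {A : Type*} [AddCommGroup A] (a : A) (c : ℤ → A) :
    ∃ s : ℤ → A, s 0 = a ∧ ∀ i, s i - s (i - 1) = c i := by
  let s (i : ℤ) : A :=
    Int.inductionOn' (motive := fun _ => A) i 0 a (fun k _ x => x + c (k + 1)) fun k _ x => x - c k
  refine ⟨s, Int.inductionOn'_self .., fun i => ?_⟩
  rcases le_or_gt i 0 with hi | hi
  · have : s (i - 1) = s i - c i := Int.inductionOn'_sub_one hi
    rw [this, sub_sub_cancel]
  · have : s (i - 1 + 1) = s (i - 1) + c (i - 1 + 1) :=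
      Int.inductionOn'_add_one (by lia)
    rw [sub_add_cancel] at this
    rw [this, add_sub_cancel_left]

/-- The discrete Poincaré lemma in the plane. -/
theorem exists_potential {A : Type*} [AddCommGroup A] {h v : ℤ → ℤ → A}
    (hclosed : ∀ i j, h i j - h i (j - 1) = v i j - v (i - 1) j) :
    ∃ y : ℤ → ℤ → A, (∀ i j, y i j - y (i - 1) j = h i j) ∧ ∀ i j, y i j - y i (j - 1) = v i j := by
  obtain ⟨y₀, -, hy₀⟩ := exists_antidifference 0 fun i => h i 0
  choose y hyzero hyv using fun i => exists_antidifference (y₀ i) (v i)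
  refine ⟨y, fun i j => ?_, hyv⟩
  have hperiodic : Function.Periodic (fun j => y i j - y (i - 1) j - h i j) 1 := fun j => by
    have := hclosed i (j + 1)
    rw [← hyv, ← hyv, add_sub_cancel_right] at this
    grind only
  have := hperiodic.zsmul_eq j
  simpa [hyzero, hy₀, sub_eq_zero] using this

/-- The unit vector of a grid edge; `true` stands for horizontal. -/
def gridStep : Bool → ℤ × ℤ
  | true => (1, 0)
  | false => (0, 1)

/-- The square grid on `ℤ × ℤ`, as a multigraph: the edge `(p, b)` starts at `p` and runs in the
direction `b`. -/
def gridEnds (e : (ℤ × ℤ) × Bool) : (ℤ × ℤ) × (ℤ × ℤ) :=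
  (e.1, e.1 + gridStep e.2)

/-- The two unit squares bordering a grid edge, each named by its lower left corner. -/
def gridDual (e : (ℤ × ℤ) × Bool) : (ℤ × ℤ) × (ℤ × ℤ) :=
  (e.1, e.1 - gridStep !e.2)

theorem mem_cutSpace_gridDual {f : (ℤ × ℤ) × Bool → ZMod 2} :
    f ∈ cutSpace gridDual ↔ ∀ p, ∑ b, (f (p, b) + f (p - gridStep b, b)) = 0 := by
  constructor
  · rintro ⟨y, rfl⟩ ⟨i, j⟩
    simp only [coboundary_apply, gridDual, gridStep, Fintype.sum_bool, Bool.not_true,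
      Bool.not_false, Prod.mk_sub_mk, sub_zero]
    grind only
  · intro hf
    obtain ⟨y, hyh, hyv⟩ := exists_potential (h := fun i j => f ((i, j), false))
      (v := fun i j => f ((i, j), true)) fun i j => by
        have := hf (i, j)
        simp only [gridStep, Fintype.sum_bool, Prod.mk_sub_mk, sub_zero] at this
        grind only
    refine ⟨fun p => y p.1 p.2, ?_⟩
    funext ⟨⟨i, j⟩, b⟩
    cases b
    · simpa [gridDual, gridStep, CharTwo.sub_eq_add] using hyh i j
    · simpa [gridDual, gridStep, CharTwo.sub_eq_add] using hyv i j

theorem coboundary_gridEnds_single (p : ℤ × ℤ) :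
    coboundary gridEnds (Pi.single p 1) =
      ∑ b, (Pi.single (p, b) 1 + Pi.single (p - gridStep b, b) 1) := by
  funext ⟨q, b⟩
  simp only [coboundary_apply, gridEnds, Pi.single_apply, Finset.sum_apply, Pi.add_apply,
    Prod.mk.injEq, eq_sub_iff_add_eq]
  cases b <;> simp

theorem mem_cycleSpace_gridEnds_comp {E : Type*} [Fintype E] {j : E → (ℤ × ℤ) × Bool}
    (hj : Function.Injective j) {z : E → ZMod 2} :
    z ∈ cycleSpace (gridEnds ∘ j) ↔ Function.extend j z 0 ∈ cutSpace gridDual := by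
  rw [mem_cycleSpace_iff_forall_single, mem_cutSpace_gridDual]
  refine forall_congr' fun p => ?_
  calc z ⬝ᵥ coboundary (gridEnds ∘ j) (Pi.single p 1) = 0
      ↔ z ⬝ᵥ (coboundary gridEnds (Pi.single p 1) ∘ j) = 0 := Iff.rfl
    _ ↔ ∑ b, (Function.extend j z 0 (p, b) + Function.extend j z 0 (p - gridStep b, b)) = 0 := by
      simp only [coboundary_gridEnds_single, dotProduct, Function.comp_apply, Finset.sum_apply,
        Pi.add_apply, Finset.mul_sum, mul_add]
      rw [Finset.sum_comm]
      simp only [Finset.sum_add_distrib, sum_mul_single_comp hj]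

theorem exists_isDual_gridEnds_comp {E : Type*} [Fintype E] {j : E → (ℤ × ℤ) × Bool}
    (hj : Function.Injective j) :
    ∃ (F : Type) (_ : Finite F) (_ : Nonempty F) (dual : E → F × F),
      IsDual (gridEnds ∘ j) dual := by
  let deleted (a b : ℤ × ℤ) : Prop := ∃ e ∉ Set.range j, gridDual e = (a, b)
  obtain ⟨S, hfin, hne, dual, hdual⟩ := exists_finite_cutSpace_eq
    (Prod.map (Quot.mk deleted) (Quot.mk deleted) ∘ gridDual ∘ j)
  refine ⟨S, hfin, hne, dual, hdual.trans ?_⟩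
  ext z
  exact (extend_mem_cutSpace_iff hj).symm.trans (mem_cycleSpace_gridEnds_comp hj).symm

end Grid

section Minor

variable {V W E E' I : Type*}

/-- The simple graph underlying a multigraph: loops are dropped and parallel edges merged. -/
def underlyingGraph (ends : E → V × V) : SimpleGraph V :=
  SimpleGraph.fromEdgeSet (Set.range fun e => s((ends e).1, (ends e).2))

theorem underlyingGraph_adj {ends : E → V × V} {a b : V} :
    (underlyingGraph ends).Adj a b ↔ (∃ e, ends e = (a, b) ∨ ends e = (b, a)) ∧ a ≠ b := by
  simp [underlyingGraph, Prod.ext_iff]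

/-- The sets `B v` are the branch sets of a model of `G` as a minor of `host`. -/
structure IsMinorModel (G : SimpleGraph V) (host : SimpleGraph W) (B : V → Set W) : Prop where
  connected (v : V) : (host.induce (B v)).Connected
  disjoint : Pairwise (Function.onFun Disjoint B)
  exists_adj {u v : V} : G.Adj u v → ∃ a ∈ B u, ∃ b ∈ B v, host.Adj a b

theorem apply_eq_of_reachable {host : SimpleGraph W} {S : Set W} {X : Type*} {x : W → X}
    (hx : ∀ a ∈ S, ∀ b ∈ S, host.Adj a b → x a = x b) {a b : S}
    (hab : (host.induce S).Reachable a b) : x a = x b := by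
  obtain ⟨p⟩ := hab
  induction p with
  | nil => rfl
  | cons hadj _ ih => exact (hx _ (Subtype.prop _) _ (Subtype.prop _) hadj).trans ih

theorem map_ker_coboundary_eq_cutSpace_of_pairwise_disjoint {B : V → Set W}
    (hdisj : Pairwise (Function.onFun Disjoint B)) (hne : ∀ v, (B v).Nonempty)
    {endsV : E → V × V} {ends : E → W × W} {inner : I → W × W}
    (hends : ∀ e, (ends e).1 ∈ B (endsV e).1 ∧ (ends e).2 ∈ B (endsV e).2)
    (hinner : ∀ i, ∃ v, (inner i).1 ∈ B v ∧ (inner i).2 ∈ B v)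
    (hconst : ∀ x, coboundary inner x = 0 → ∀ v, ∀ a ∈ B v, ∀ b ∈ B v, x a = x b) :
    (LinearMap.ker (coboundary inner)).map (coboundary ends) = cutSpace endsV := by
  refine le_antisymm ?_ ?_
  · rintro _ ⟨x, hx, rfl⟩
    choose rep hrep using hne
    refine ⟨x ∘ rep, funext fun e => ?_⟩
    exact congrArg₂ (· + ·) (hconst x hx _ _ (hrep _) _ (hends e).1)
      (hconst x hx _ _ (hrep _) _ (hends e).2)
  · rintro _ ⟨y, rfl⟩
    classical
    let x (a : W) : ZMod 2 := if h : ∃ v, a ∈ B v then y h.choose else 0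
    have hx {v : V} {a : W} (ha : a ∈ B v) : x a = y v := by
      have h : ∃ v, a ∈ B v := ⟨v, ha⟩
      have : h.choose = v := hdisj.eq (Set.not_disjoint_iff.2 ⟨a, h.choose_spec, ha⟩)
      simp only [x, dif_pos h, this]
    refine ⟨x, funext fun i => ?_, funext fun e => ?_⟩
    · obtain ⟨v, h₁, h₂⟩ := hinner i
      rw [coboundary_apply, hx h₁, hx h₂]
      exact CharTwo.add_self_eq_zero _
    · rw [coboundary_apply, hx (hends e).1, hx (hends e).2, coboundary_apply]

/-- The edges of a multigraph with both ends in the same branch set. They are the edges contracted to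
obtain the minor. -/
def innerEdges (hostEnds : E' → W × W) (B : V → Set W) : Set E' :=
  {e | ∃ v, (hostEnds e).1 ∈ B v ∧ (hostEnds e).2 ∈ B v}

variable {G : SimpleGraph V} {hostEnds : E' → W × W} {B : V → Set W}

theorem IsMinorModel.map_ker_coboundary_eq_cutSpace
    (h : IsMinorModel G (underlyingGraph hostEnds) B) {endsV : E → V × V} {link : E → E'}
    (hlink : ∀ e, (hostEnds (link e)).1 ∈ B (endsV e).1 ∧ (hostEnds (link e)).2 ∈ B (endsV e).2) :
    (LinearMap.ker (coboundary (hostEnds ∘ (Subtype.val : innerEdges hostEnds B → E')))).map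
      (coboundary (hostEnds ∘ link)) = cutSpace endsV := by
  refine map_ker_coboundary_eq_cutSpace_of_pairwise_disjoint h.disjoint
    (fun v => Set.nonempty_coe_sort.1 (h.connected v).nonempty) hlink Subtype.prop ?_
  intro x hx v a ha b hb
  refine apply_eq_of_reachable (fun c hc d hd hcd => ?_)
    ((h.connected v).preconnected ⟨a, ha⟩ ⟨b, hb⟩)
  obtain ⟨⟨e, he | he⟩, -⟩ := underlyingGraph_adj.1 hcd
  · have := congrFun hx ⟨e, v, by rw [he]; exact ⟨hc, hd⟩⟩
    simpa [he, CharTwo.add_eq_zero] using this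
  · have := congrFun hx ⟨e, v, by rw [he]; exact ⟨hd, hc⟩⟩
    simpa [he, CharTwo.add_eq_zero, eq_comm] using this

theorem IsMinorModel.exists_link (h : IsMinorModel G (underlyingGraph hostEnds) B)
    (e : G.edgeSet) : ∃ (endsV : V × V) (link : E'), s(endsV.1, endsV.2) = e.1 ∧
      (hostEnds link).1 ∈ B endsV.1 ∧ (hostEnds link).2 ∈ B endsV.2 := by
  obtain ⟨⟨u, v⟩, huv⟩ := e
  obtain ⟨a, ha, b, hb, hab⟩ := h.exists_adj huv
  obtain ⟨⟨e, he | he⟩, -⟩ := underlyingGraph_adj.1 hab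
  · exact ⟨(u, v), e, rfl, by rw [he]; exact ⟨ha, hb⟩⟩
  · exact ⟨(v, u), e, Sym2.eq_swap, by rw [he]; exact ⟨hb, ha⟩⟩

theorem IsMinorModel.injective_sumElim (h : IsMinorModel G (underlyingGraph hostEnds) B)
    {endsV : G.edgeSet → V × V} (hendsV : ∀ e, s((endsV e).1, (endsV e).2) = e.1)
    {link : G.edgeSet → E'}
    (hlink : ∀ e, (hostEnds (link e)).1 ∈ B (endsV e).1 ∧ (hostEnds (link e)).2 ∈ B (endsV e).2) :
    Function.Injective (Sum.elim link (Subtype.val : innerEdges hostEnds B → E')) := by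
  have hunique {u v : V} {a : W} (hu : a ∈ B u) (hv : a ∈ B v) : u = v :=
    h.disjoint.eq (Set.not_disjoint_iff.2 ⟨a, hu, hv⟩)
  refine Function.Injective.sumElim (fun e e' hee' => ?_) Subtype.val_injective ?_
  · have h₁ := hunique (hlink e).1 (hee' ▸ (hlink e').1)
    have h₂ := hunique (hlink e).2 (hee' ▸ (hlink e').2)
    exact Subtype.ext (by rw [← hendsV, ← hendsV, h₁, h₂])
  · rintro e ⟨_, v, hv₁, hv₂⟩ rfl
    have hloop : (endsV e).1 = (endsV e).2 :=
      (hunique (hlink e).1 hv₁).trans (hunique (hlink e).2 hv₂).symm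
    have := G.not_isDiag_of_mem_edgeSet e.2
    rw [← hendsV e] at this
    exact this hloop

theorem finite_innerEdges_gridEnds [Finite V] {B : V → Set (ℤ × ℤ)} (hB : ∀ v, (B v).Finite) :
    (innerEdges gridEnds B).Finite := by
  refine (((Set.finite_iUnion hB).prod (Set.finite_univ (α := Bool)))).subset ?_
  rintro ⟨p, b⟩ ⟨v, hp, -⟩
  exact ⟨Set.mem_iUnion.2 ⟨v, hp⟩, Set.mem_univ b⟩

theorem exists_isDual_of_isMinorModel_gridEnds [Finite V] {B : V → Set (ℤ × ℤ)}
    (h : IsMinorModel G (underlyingGraph gridEnds) B) (hB : ∀ v, (B v).Finite)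
    [Fintype G.edgeSet] :
    ∃ (F : Type) (_ : Finite F) (_ : Nonempty F) (ends : G.edgeSet → V × V)
      (dual : G.edgeSet → F × F), (∀ e, s((ends e).1, (ends e).2) = e.1) ∧ IsDual ends dual := by
  have := (finite_innerEdges_gridEnds hB).fintype
  choose ends link hends hlink using h.exists_link
  obtain ⟨F, hfin, hne, dual, hdual⟩ :=
    exists_isDual_gridEnds_comp (h.injective_sumElim hends hlink)
  rw [Sum.comp_elim] at hdual
  exact ⟨F, hfin, hne, ends, dual ∘ Sum.inl, hends,
    hdual.contract (h.map_ker_coboundary_eq_cutSpace hlink)⟩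

end Minor

section ThickDrawing

variable {V W : Type*} {G : SimpleGraph V} {host : SimpleGraph W}

/-- Sets representing the vertices and the edges of `G`, of which only the sets of an edge and of
one of its ends may meet. -/
structure IsIncidenceFamily (G : SimpleGraph V) (D : V → Set W) (A : Sym2 V → Set W) : Prop where
  disjoint_vertices : Pairwise (Function.onFun Disjoint D)
  disjoint_vertex_edge : ∀ e ∈ G.edgeSet, ∀ w ∉ e, Disjoint (D w) (A e)
  disjoint_edges : G.edgeSet.Pairwise (Function.onFun Disjoint A)

/-- A drawing of `G` in the graph `host` in which the vertices and the edges of `G` are replaced by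
sets of vertices of `host`. -/
structure IsThickDrawing (G : SimpleGraph V) (host : SimpleGraph W) (D : V → Set W)
    (A : Sym2 V → Set W) : Prop extends IsIncidenceFamily G D A where
  connected (v : V) : (host.induce (D v)).Connected
  preconnected {u v : V} : G.Adj u v → (host.induce (D u ∪ A s(u, v) ∪ D v)).Preconnected

theorem exists_connected_subset_sdiff_of_walk {S T : Set W} {a b : S}
    (p : (host.induce S).Walk a b) (ha : a.1 ∉ T) (hb : b.1 ∈ T) :
    ∃ P ⊆ S \ T, P.Finite ∧ a.1 ∈ P ∧ (host.induce P).Connected ∧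
      ∃ c ∈ P, ∃ d ∈ T, host.Adj c d := by
  induction p with
  | nil => exact absurd hb ha
  | @cons a a' _ hadj _ ih =>
    have hsingle : (host.induce {a.1}).Connected := ⟨.of_subsingleton⟩
    by_cases ha' : a'.1 ∈ T
    · exact ⟨{a.1}, Set.singleton_subset_iff.2 ⟨a.2, ha⟩, Set.finite_singleton _,
        Set.mem_singleton _, hsingle, a, Set.mem_singleton _, a', ha', hadj⟩
    · obtain ⟨P, hP, hfin, ha'P, hconn, c, hc, d, hd, hcd⟩ := ih ha' hb
      exact ⟨{a.1} ∪ P, Set.union_subset (Set.singleton_subset_iff.2 ⟨a.2, ha⟩) hP,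
        (Set.finite_singleton _).union hfin, .inl rfl,
        SimpleGraph.connected_induce_union hsingle.preconnected hconn.preconnected rfl ha'P hadj,
        c, .inr hc, d, hd, hcd⟩

theorem connected_induce_union_iUnion {ι : Sort*} {D : Set W} {P : ι → Set W}
    (hD : (host.induce D).Connected) (hP : ∀ i, (host.induce (P i)).Connected)
    (hmeet : ∀ i, (D ∩ P i).Nonempty) : (host.induce (D ∪ ⋃ i, P i)).Connected := by
  obtain ⟨⟨d, hd⟩⟩ := hD.nonempty
  refine SimpleGraph.induce_connected_of_patches d (.inl hd) fun {w} hw => ?_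
  rcases hw with hw | hw
  · exact ⟨D, Set.subset_union_left, hd, hw, hD.preconnected _ _⟩
  · obtain ⟨i, hi⟩ := Set.mem_iUnion.1 hw
    have hunion := SimpleGraph.induce_union_connected hD.preconnected (hP i).preconnected (hmeet i)
    exact ⟨D ∪ P i, Set.union_subset_union_right _ (Set.subset_iUnion _ i), .inl hd, .inr hi,
      hunion.preconnected _ _⟩

theorem pairwise_disjoint_union_iUnion {E : Type*} {D : V → Set W} {P : E → Set W} {tail : E → V}
    (hDD : Pairwise (Function.onFun Disjoint D))
    (hDP : ∀ v e, tail e ≠ v → Disjoint (D v) (P e))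
    (hPP : ∀ e e', tail e ≠ tail e' → Disjoint (P e) (P e')) :
    Pairwise (Function.onFun Disjoint fun v => D v ∪ ⋃ e : {e // tail e = v}, P e) := by
  intro u v huv
  refine Set.disjoint_union_left.2 ⟨Set.disjoint_union_right.2 ⟨hDD huv, ?_⟩,
    Set.disjoint_union_right.2 ⟨?_, ?_⟩⟩
  · exact Set.disjoint_iUnion_right.2 fun ⟨e, he⟩ => hDP u e (he.trans_ne huv.symm)
  · exact Set.disjoint_iUnion_left.2 fun ⟨e, he⟩ => (hDP v e (he.trans_ne huv)).symm
  · exact Set.disjoint_iUnion_left.2 fun ⟨e, he⟩ => Set.disjoint_iUnion_right.2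
      fun ⟨e', he'⟩ => hPP e e' (he.trans_ne (huv.trans_eq he'.symm))

variable {D : V → Set W} {A : Sym2 V → Set W}

theorem IsThickDrawing.exists_half_edge (h : IsThickDrawing G host D A) (e : G.edgeSet) :
    ∃ (u v : V) (P : Set W), s(u, v) = e.1 ∧ P ⊆ (D u ∪ A e) \ D v ∧ P.Finite ∧
      (D u ∩ P).Nonempty ∧ (host.induce P).Connected ∧ ∃ a ∈ P, ∃ b ∈ D v, host.Adj a b := by
  obtain ⟨⟨u, v⟩, huv⟩ := e
  obtain ⟨⟨a, ha⟩⟩ := (h.connected u).nonempty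
  obtain ⟨⟨b, hb⟩⟩ := (h.connected v).nonempty
  have hav : a ∉ D v := fun hav =>
    (h.disjoint_vertices (G.ne_of_adj huv)).le_bot ⟨ha, hav⟩
  obtain ⟨p⟩ := h.preconnected huv ⟨a, .inl (.inl ha)⟩ ⟨b, .inr hb⟩
  obtain ⟨P, hP, hfin, haP, hconn, hadj⟩ := exists_connected_subset_sdiff_of_walk p hav hb
  rw [Set.union_sdiff_right] at hP
  exact ⟨u, v, P, rfl, hP, hfin, ⟨a, ha, haP⟩, hconn, hadj⟩

/-- The set of an edge, up to where it reaches the head of the edge, goes to the branch set of its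
tail. -/
theorem IsThickDrawing.exists_isMinorModel [Finite V] (h : IsThickDrawing G host D A)
    (hfin : ∀ v, (D v).Finite) :
    ∃ B : V → Set W, IsMinorModel G host B ∧ ∀ v, (B v).Finite := by
  choose tail head P he hP hPfin hmeet hPconn hadj using h.exists_half_edge
  have hDP (u : V) (e : G.edgeSet) (hu : tail e ≠ u) : Disjoint (D u) (P e) := by
    rw [Set.disjoint_left]
    intro a haD haP
    obtain ⟨haD' | haA, hahead⟩ := hP e haP
    · exact (h.disjoint_vertices hu).le_bot ⟨haD', haD⟩
    · refine (h.disjoint_vertex_edge e e.2 u ?_).le_bot ⟨haD, haA⟩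
      rw [← he, Sym2.mem_iff, not_or]
      exact ⟨hu.symm, fun hu => hahead (hu ▸ haD)⟩
  have hPP (e e' : G.edgeSet) (hne : tail e ≠ tail e') : Disjoint (P e) (P e') := by
    rw [Set.disjoint_left]
    intro a ha ha'
    obtain ⟨haD | haA, -⟩ := hP e ha
    · exact (hDP _ _ hne.symm).le_bot ⟨haD, ha'⟩
    obtain ⟨haD' | haA', -⟩ := hP e' ha'
    · exact (hDP _ _ hne).le_bot ⟨haD', ha⟩
    · exact (h.disjoint_edges e.2 e'.2 fun h => hne (congrArg tail (Subtype.ext h))).le_bot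
        ⟨haA, haA'⟩
  refine ⟨fun v => D v ∪ ⋃ e : {e // tail e = v}, P e, ⟨fun v => ?_,
    pairwise_disjoint_union_iUnion h.disjoint_vertices hDP hPP, fun {u v} huv => ?_⟩, fun v => ?_⟩
  · refine connected_induce_union_iUnion (h.connected v) (fun e => hPconn e) ?_
    rintro ⟨e, rfl⟩
    exact hmeet e
  · let e : G.edgeSet := ⟨s(u, v), huv⟩
    obtain ⟨a, haP, b, hb, hab⟩ := hadj e
    have ha : a ∈ D (tail e) ∪ ⋃ e' : {e' // tail e' = tail e}, P e' :=
      .inr (Set.mem_iUnion.2 ⟨⟨e, rfl⟩, haP⟩)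
    rcases Sym2.eq_iff.1 (he e) with ⟨hu, hv⟩ | ⟨hv, hu⟩
    · exact ⟨a, hu ▸ ha, b, hv ▸ .inl hb, hab⟩
    · exact ⟨b, hu ▸ .inl hb, a, hv ▸ ha, hab.symm⟩
  · exact (hfin v).union (Set.finite_iUnion fun e => hPfin e)

end ThickDrawing

section LatticeShadow

open Filter Topology

/-- The points of the lattice `R⁻¹ • ℤ²` at sup distance less than `R⁻¹` from `p`, scaled to
`ℤ²`. -/
def latticeNear (R : ℝ) (p : EuclideanSpace ℝ (Fin 2)) : Set (ℤ × ℤ) :=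
  {g | |R * p 0 - g.1| < 1 ∧ |R * p 1 - g.2| < 1}

/-- The approximation of a plane set by the lattice `R⁻¹ • ℤ²`. -/
def latticeShadow (R : ℝ) (S : Set (EuclideanSpace ℝ (Fin 2))) : Set (ℤ × ℤ) :=
  ⋃ p ∈ S, latticeNear R p

theorem latticeNear_nonempty (R : ℝ) (p : EuclideanSpace ℝ (Fin 2)) :
    (latticeNear R p).Nonempty := by
  have h (x : ℝ) : |x - ⌊x⌋| < 1 := by
    rw [Int.self_sub_floor, Int.abs_fract]
    exact Int.fract_lt_one x
  exact ⟨(⌊R * p 0⌋, ⌊R * p 1⌋), h _, h _⟩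

theorem underlyingGraph_gridEnds_adj {i j i' j' : ℤ} :
    (underlyingGraph gridEnds).Adj (i, j) (i', j') ↔
      i = i' ∧ (j = j' + 1 ∨ j' = j + 1) ∨ (i = i' + 1 ∨ i' = i + 1) ∧ j = j' := by
  simp only [underlyingGraph_adj, gridEnds, Prod.exists, Bool.exists_bool, gridStep,
    Prod.mk_add_mk, Prod.mk.injEq, add_zero]
  grind only

theorem eq_or_eq_add_one_of_abs_sub_lt_one {x : ℝ} {i j : ℤ} (hi : |x - i| < 1)
    (hj : |x - j| < 1) : i = j ∨ i = j + 1 ∨ j = i + 1 := by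
  rw [abs_lt] at hi hj
  have h₁ : (i : ℝ) < j + 2 := by linarith
  have h₂ : (j : ℝ) < i + 2 := by linarith
  norm_cast at h₁ h₂
  lia

theorem connected_induce_latticeNear (R : ℝ) (p : EuclideanSpace ℝ (Fin 2)) :
    ((underlyingGraph gridEnds).induce (latticeNear R p)).Connected := by
  rw [SimpleGraph.connected_iff]
  refine ⟨?_, (latticeNear_nonempty R p).to_subtype⟩
  rintro ⟨⟨i, j⟩, hi, hj⟩ ⟨⟨i', j'⟩, hi', hj'⟩
  have hreach {a b : ℤ × ℤ} (ha : a ∈ latticeNear R p) (hb : b ∈ latticeNear R p)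
      (h : a = b ∨ (underlyingGraph gridEnds).Adj a b) :
      ((underlyingGraph gridEnds).induce (latticeNear R p)).Reachable ⟨a, ha⟩ ⟨b, hb⟩ := by
    rcases h with rfl | h
    · rfl
    · exact SimpleGraph.Adj.reachable (G := (underlyingGraph gridEnds).induce _) h
  have hcorner : (i', j) ∈ latticeNear R p := ⟨hi', hj⟩
  refine (hreach ⟨hi, hj⟩ hcorner ?_).trans (hreach hcorner ⟨hi', hj'⟩ ?_)
  · have := eq_or_eq_add_one_of_abs_sub_lt_one hi hi'
    rw [Prod.mk.injEq, underlyingGraph_gridEnds_adj]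
    tauto
  · have := eq_or_eq_add_one_of_abs_sub_lt_one hj hj'
    rw [Prod.mk.injEq, underlyingGraph_gridEnds_adj]
    tauto

theorem eventually_mem_latticeNear {R : ℝ} {p : EuclideanSpace ℝ (Fin 2)} {g : ℤ × ℤ}
    (hg : g ∈ latticeNear R p) : ∀ᶠ q in 𝓝 p, g ∈ latticeNear R q := by
  have hcont (i : Fin 2) (k : ℤ) :
      Continuous fun q : EuclideanSpace ℝ (Fin 2) => |R * q i - k| := by
    fun_prop
  exact (((hcont 0 g.1).tendsto p).eventually_lt_const hg.1).and
    (((hcont 1 g.2).tendsto p).eventually_lt_const hg.2)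

theorem preconnected_induce_latticeShadow (R : ℝ) {S : Set (EuclideanSpace ℝ (Fin 2))}
    (hS : IsPreconnected S) :
    ((underlyingGraph gridEnds).induce (latticeShadow R S)).Preconnected := by
  let joined (p q : EuclideanSpace ℝ (Fin 2)) : Prop :=
    ∃ T ⊆ latticeShadow R S, latticeNear R p ⊆ T ∧ latticeNear R q ⊆ T ∧
      ((underlyingGraph gridEnds).induce T).Preconnected
  have hjoined : ∀ p ∈ S, ∀ q ∈ S, joined p q := by
    intro p hp q hq
    refine hS.induction₂ joined (fun p hp => ?_) ?_ ?_ hp hq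
    · obtain ⟨g, hg⟩ := latticeNear_nonempty R p
      filter_upwards [self_mem_nhdsWithin, mem_nhdsWithin_of_mem_nhds
        (eventually_mem_latticeNear hg)] with q hq hgq
      exact ⟨latticeNear R p ∪ latticeNear R q,
        Set.union_subset (Set.subset_biUnion_of_mem hp) (Set.subset_biUnion_of_mem hq),
        Set.subset_union_left, Set.subset_union_right,
        (SimpleGraph.induce_union_connected (connected_induce_latticeNear R p).preconnected
          (connected_induce_latticeNear R q).preconnected ⟨g, hg, hgq⟩).preconnected⟩
    · rintro p q r - - - ⟨T, hT, hpT, hqT, hconn⟩ ⟨T', hT', hqT', hrT', hconn'⟩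
      obtain ⟨g, hg⟩ := latticeNear_nonempty R q
      exact ⟨T ∪ T', Set.union_subset hT hT', hpT.trans Set.subset_union_left,
        hrT'.trans Set.subset_union_right,
        (SimpleGraph.induce_union_connected hconn hconn' ⟨g, hqT hg, hqT' hg⟩).preconnected⟩
    · rintro p q - - ⟨T, hT, hpT, hqT, hconn⟩
      exact ⟨T, hT, hqT, hpT, hconn⟩
  rintro ⟨a, ha⟩ ⟨b, hb⟩
  obtain ⟨p, hp, hap⟩ := Set.mem_iUnion₂.1 ha
  obtain ⟨q, hq, hbq⟩ := Set.mem_iUnion₂.1 hb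
  obtain ⟨T, hT, hpT, hqT, hconn⟩ := hjoined p hp q hq
  exact (hconn ⟨a, hpT hap⟩ ⟨b, hqT hbq⟩).map (SimpleGraph.induceHomOfLE _ hT).toHom

theorem finite_latticeShadow (R : ℝ) {S : Set (EuclideanSpace ℝ (Fin 2))}
    (hS : Bornology.IsBounded S) : (latticeShadow R S).Finite := by
  obtain ⟨M, hM⟩ := hS.exists_norm_le
  let K : ℤ := ⌈|R| * M + 1⌉
  have hK {p : EuclideanSpace ℝ (Fin 2)} (hp : p ∈ S) {i : Fin 2} {k : ℤ}
      (hk : |R * p i - k| < 1) : k ∈ Set.Icc (-K) K := by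
    have hpi : |R * p i| ≤ |R| * M := by
      rw [abs_mul]
      exact mul_le_mul_of_nonneg_left ((PiLp.norm_apply_le p i).trans (hM p hp)) (abs_nonneg R)
    have hceil := Int.le_ceil (|R| * M + 1)
    have hkK : |(k : ℝ)| ≤ K := by
      have := abs_sub_abs_le_abs_sub (k : ℝ) (R * p i)
      rw [abs_sub_comm] at this
      linarith
    exact abs_le.1 (by exact_mod_cast hkK)
  refine ((Set.finite_Icc (-K) K).prod (Set.finite_Icc (-K) K)).subset ?_
  exact Set.iUnion₂_subset fun p hp g hg => ⟨hK hp hg.1, hK hp hg.2⟩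

theorem dist_lt_of_mem_latticeNear {R : ℝ} (hR : 0 < R) {p q : EuclideanSpace ℝ (Fin 2)}
    {g : ℤ × ℤ} (hp : g ∈ latticeNear R p) (hq : g ∈ latticeNear R q) : dist p q < 4 / R := by
  have hcoord {x y z : ℝ} (hx : |R * x - z| < 1) (hy : |R * y - z| < 1) : dist x y < 2 / R := by
    rw [abs_sub_comm] at hy
    rw [lt_div_iff₀' hR, Real.dist_eq]
    calc R * |x - y| = |(R * x - z) + (z - R * y)| := by
          rw [← abs_of_pos hR, ← abs_mul, abs_of_pos hR]
          ring_nf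
      _ < 2 := by linarith [abs_add_le (R * x - z) (z - R * y)]
  have h₀ : dist (p 0) (q 0) ^ 2 < (2 / R) ^ 2 :=
    pow_lt_pow_left₀ (hcoord hp.1 hq.1) dist_nonneg two_ne_zero
  have h₁ : dist (p 1) (q 1) ^ 2 < (2 / R) ^ 2 :=
    pow_lt_pow_left₀ (hcoord hp.2 hq.2) dist_nonneg two_ne_zero
  rw [EuclideanSpace.dist_eq, Real.sqrt_lt' (by positivity), Fin.sum_univ_two]
  calc dist (p 0) (q 0) ^ 2 + dist (p 1) (q 1) ^ 2
      < (2 / R) ^ 2 + (2 / R) ^ 2 := add_lt_add h₀ h₁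
    _ ≤ (4 / R) ^ 2 := by
      rw [div_pow, div_pow, ← add_div]
      gcongr
      norm_num

theorem eventually_disjoint_latticeShadow {K L : Set (EuclideanSpace ℝ (Fin 2))} (hK : IsCompact K)
    (hL : IsClosed L) (hKL : Disjoint K L) :
    ∀ᶠ R in atTop, Disjoint (latticeShadow R K) (latticeShadow R L) := by
  obtain ⟨r, hr, hrKL⟩ := Metric.exists_pos_forall_lt_edist hK hL hKL
  filter_upwards [eventually_gt_atTop 0, eventually_ge_atTop (4 / (r : ℝ))] with R hR hRr
  rw [Set.disjoint_left]
  intro g hgK hgL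
  obtain ⟨p, hp, hgp⟩ := Set.mem_iUnion₂.1 hgK
  obtain ⟨q, hq, hgq⟩ := Set.mem_iUnion₂.1 hgL
  have hfar : (r : ℝ) < dist p q := by
    have := hrKL p hp q hq
    rwa [edist_nndist, ENNReal.coe_lt_coe] at this
  have hnear := dist_lt_of_mem_latticeNear hR hgp hgq
  rw [div_le_comm₀ (by exact_mod_cast hr) hR] at hRr
  linarith

end LatticeShadow

section Planar

open Filter Topology

variable {V : Type*} {G : SimpleGraph V}

theorem IsIncidenceFamily.eventually_latticeShadow [Finite V]
    {D : V → Set (EuclideanSpace ℝ (Fin 2))} {A : Sym2 V → Set (EuclideanSpace ℝ (Fin 2))}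
    (h : IsIncidenceFamily G D A) (hD : ∀ v, IsCompact (D v))
    (hA : ∀ e ∈ G.edgeSet, IsCompact (A e)) :
    ∀ᶠ R in atTop, IsIncidenceFamily G (fun v => latticeShadow R (D v))
      fun e => latticeShadow R (A e) := by
  have h₁ : ∀ᶠ R in atTop, Pairwise (Function.onFun Disjoint fun v => latticeShadow R (D v)) := by
    simp only [Pairwise, eventually_all]
    exact fun u v huv => eventually_disjoint_latticeShadow (hD u) (hD v).isClosed
      (h.disjoint_vertices huv)
  have h₂ : ∀ᶠ R in atTop, ∀ e ∈ G.edgeSet, ∀ w ∉ e,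
      Disjoint (latticeShadow R (D w)) (latticeShadow R (A e)) := by
    simp only [eventually_all]
    exact fun e he w hw => eventually_disjoint_latticeShadow (hD w) (hA e he).isClosed
      (h.disjoint_vertex_edge e he w hw)
  have h₃ : ∀ᶠ R in atTop, G.edgeSet.Pairwise
      (Function.onFun Disjoint fun e => latticeShadow R (A e)) := by
    simp only [Set.Pairwise, eventually_all]
    exact fun e he e' he' hne => eventually_disjoint_latticeShadow (hA e he) (hA e' he').isClosed
      (h.disjoint_edges he he' hne)
  filter_upwards [h₁, h₂, h₃] with R h₁ h₂ h₃ using ⟨h₁, h₂, h₃⟩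

section CrossingFree

variable {X : Type*}

/-- The part of the arc of an edge outside the discs of radius `r` around its ends. -/
def truncatedArc [PseudoMetricSpace X] (f : V → X) (arc : Sym2 V → Set X) (r : ℝ) (e : Sym2 V) :
    Set X :=
  arc e \ ⋃ w ∈ e, Metric.ball (f w) r

variable {f : V → X} {arc : Sym2 V → Set X} {S : Set X}

theorem IsCrossingFreeDrawingIn.isCompact_arc [TopologicalSpace X]
    (h : IsCrossingFreeDrawingIn G f arc S) {e : Sym2 V} (he : e ∈ G.edgeSet) :
    IsCompact (arc e) := by
  obtain ⟨u, v⟩ := e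
  obtain ⟨γ, -, hγ⟩ := h.2.1 u v he
  exact hγ ▸ isCompact_range γ.continuous

theorem IsCrossingFreeDrawingIn.eventually_isIncidenceFamily [MetricSpace X] [Finite V]
    (h : IsCrossingFreeDrawingIn G f arc S) :
    ∀ᶠ r in 𝓝[>] 0,
      IsIncidenceFamily G (fun v => Metric.closedBall (f v) r) (truncatedArc f arc r) := by
  have h₁ : ∀ᶠ r in 𝓝[>] 0,
      Pairwise (Function.onFun Disjoint fun v => Metric.closedBall (f v) r) := by
    simp only [Pairwise, eventually_all]
    intro u v huv
    have hpos : 0 < dist (f u) (f v) / 2 := half_pos (dist_pos.2 (h.1.ne huv))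
    filter_upwards [mem_nhdsWithin_of_mem_nhds (Iio_mem_nhds hpos)] with r hr
    exact Metric.closedBall_disjoint_closedBall (by linarith [Set.mem_Iio.1 hr])
  have h₂ : ∀ᶠ r in 𝓝[>] 0, ∀ e ∈ G.edgeSet, ∀ w ∉ e,
      Disjoint (Metric.closedBall (f w) r) (truncatedArc f arc r e) := by
    simp only [eventually_all]
    intro e he w hw
    have hmem : f w ∈ (arc e)ᶜ := fun hmem => hw (h.2.2.2.1 e he w hmem)
    filter_upwards [mem_nhdsWithin_of_mem_nhds (eventually_closedBall_subset
      ((h.isCompact_arc he).isClosed.isOpen_compl.mem_nhds hmem))] with r hr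
    exact (disjoint_compl_left.mono_left hr).mono_right Set.sdiff_subset
  filter_upwards [h₁, h₂, self_mem_nhdsWithin] with r h₁ h₂ hr
  refine ⟨h₁, h₂, fun e he e' he' hne => ?_⟩
  have hsub (e : Sym2 V) : truncatedArc f arc r e ⊆ arc e \ f '' {x | x ∈ e} :=
    Set.sdiff_subset_sdiff_right (Set.image_subset_iff.2 fun w hw =>
      Set.mem_biUnion hw (Metric.mem_ball_self hr))
  exact (Set.disjoint_iff_inter_eq_empty.2 (h.2.2.2.2 e he e' he' hne)).mono (hsub e) (hsub e')

theorem IsCrossingFreeDrawingIn.isPreconnected_closedBall_union [NormedAddCommGroup X]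
    [NormedSpace ℝ X] (h : IsCrossingFreeDrawingIn G f arc S) {u v : V} (huv : G.Adj u v) {r : ℝ}
    (hr : 0 ≤ r) :
    IsPreconnected (Metric.closedBall (f u) r ∪ truncatedArc f arc r s(u, v) ∪
      Metric.closedBall (f v) r) := by
  obtain ⟨γ, -, hγ⟩ := h.2.1 u v huv
  have hball (w : V) : IsPreconnected (Metric.closedBall (f w) r) :=
    (convex_closedBall (f w) r).isPreconnected
  have hu : f u ∈ arc s(u, v) := hγ ▸ γ.source_mem_range
  have hv : f v ∈ arc s(u, v) := hγ ▸ γ.target_mem_range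
  have harc : IsPreconnected (arc s(u, v)) := hγ ▸ isPreconnected_range γ.continuous
  have hunion := ((hball u).union (f u) (Metric.mem_closedBall_self hr) hu harc).union (f v)
    (.inr hv) (Metric.mem_closedBall_self hr) (hball v)
  convert hunion using 1
  ext x
  have hu' := @Metric.ball_subset_closedBall _ _ (f u) r x
  have hv' := @Metric.ball_subset_closedBall _ _ (f v) r x
  simp only [truncatedArc, Sym2.mem_iff, Set.iUnion_iUnion_eq_or_left, Set.iUnion_iUnion_eq_left,
    Set.mem_union, Set.mem_sdiff]
  tauto

end CrossingFree

theorem latticeShadow_union (R : ℝ) (K L : Set (EuclideanSpace ℝ (Fin 2))) :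
    latticeShadow R (K ∪ L) = latticeShadow R K ∪ latticeShadow R L :=
  Set.biUnion_union K L (latticeNear R)

theorem IsPlanar.exists_isThickDrawing_gridEnds [Finite V] (h : IsPlanar G) :
    ∃ (D : V → Set (ℤ × ℤ)) (A : Sym2 V → Set (ℤ × ℤ)),
      IsThickDrawing G (underlyingGraph gridEnds) D A ∧ ∀ v, (D v).Finite := by
  obtain ⟨f, arc, h⟩ := h
  obtain ⟨r, hfam, hr⟩ := (h.eventually_isIncidenceFamily.and self_mem_nhdsWithin).exists
  have hball (v : V) : IsCompact (Metric.closedBall (f v) r) := isCompact_closedBall (f v) r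
  have harc (e : Sym2 V) (he : e ∈ G.edgeSet) : IsCompact (truncatedArc f arc r e) :=
    (h.isCompact_arc he).diff (isOpen_biUnion fun _ _ => Metric.isOpen_ball)
  obtain ⟨R, hR⟩ := (hfam.eventually_latticeShadow hball harc).exists
  refine ⟨_, _, ⟨hR, fun v => ?_, fun {u v} huv => ?_⟩,
    fun v => finite_latticeShadow R (hball v).isBounded⟩
  · rw [SimpleGraph.connected_iff]
    refine ⟨preconnected_induce_latticeShadow R (convex_closedBall (f v) r).isPreconnected, ?_⟩
    exact ((latticeNear_nonempty R (f v)).mono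
      (Set.subset_biUnion_of_mem (Metric.mem_closedBall_self hr.le))).to_subtype
  · rw [← latticeShadow_union, ← latticeShadow_union]
    exact preconnected_induce_latticeShadow R (h.isPreconnected_closedBall_union huv hr.le)

theorem IsPlanar.exists_isDual [Finite V] (h : IsPlanar G) [Fintype G.edgeSet] :
    ∃ (F : Type) (_ : Finite F) (_ : Nonempty F) (ends : G.edgeSet → V × V)
      (dual : G.edgeSet → F × F), (∀ e, s((ends e).1, (ends e).2) = e.1) ∧ IsDual ends dual ∧
        IsConnectedMultigraph dual := by
  obtain ⟨D, A, hthick, hfin⟩ := h.exists_isThickDrawing_gridEnds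
  obtain ⟨B, hminor, hB⟩ := hthick.exists_isMinorModel hfin
  obtain ⟨F, _, _, ends, dual, hends, hdual⟩ := exists_isDual_of_isMinorModel_gridEnds hminor hB
  obtain ⟨F', hF', hne, dual', hdual', hconn⟩ := hdual.exists_connected
  exact ⟨F', hF', hne, ends, dual', hends, hdual', hconn⟩

end Planar

section Cut

open scoped Finset

variable {V E F : Type*}

theorem exists_ne_of_mem_cycleSpace [Fintype E] {ends : E → V × V} {z : E → ZMod 2}
    (hz : z ∈ cycleSpace ends) {e : E} (he : z e ≠ 0) (hloop : (ends e).1 ≠ (ends e).2) {v : V}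
    (hv : v ∈ s((ends e).1, (ends e).2)) :
    ∃ e', e' ≠ e ∧ z e' ≠ 0 ∧ v ∈ s((ends e').1, (ends e').2) := by
  classical
  by_contra! hleaf
  have hsum := mem_cycleSpace.1 hz (Pi.single v 1)
  rw [dotProduct, Finset.sum_eq_single_of_mem e (Finset.mem_univ e)] at hsum
  · refine mul_ne_zero he ?_ hsum
    rcases Sym2.mem_iff.1 hv with rfl | rfl
    · simp [hloop]
    · simp [hloop.symm]
  · intro e' _ hne
    by_cases hz' : z e' = 0
    · rw [hz', zero_mul]
    · have hv' := hleaf e' hne hz'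
      rw [Sym2.mem_iff, not_or] at hv'
      rw [coboundary_apply, Pi.single_eq_of_ne (Ne.symm hv'.1),
        Pi.single_eq_of_ne (Ne.symm hv'.2), add_zero, mul_zero]

theorem exists_eq_triangle_of_card_le_three [DecidableEq V] {C : Finset (Sym2 V)}
    (hdiag : ∀ e ∈ C, ¬e.IsDiag) (hleaf : ∀ e ∈ C, ∀ v ∈ e, ∃ e' ∈ C, e' ≠ e ∧ v ∈ e')
    (hne : C.Nonempty) (hcard : #C ≤ 3) :
    ∃ u v w, u ≠ v ∧ v ≠ w ∧ u ≠ w ∧ C = {s(u, v), s(v, w), s(u, w)} := by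
  obtain ⟨⟨u, v⟩, huv⟩ := hne
  obtain ⟨_, hvw, hvw', w, rfl⟩ := hleaf _ huv v (Sym2.mem_mk_right u v)
  obtain ⟨_, hux, hux', x, rfl⟩ := hleaf _ huv u (Sym2.mem_mk_left u v)
  obtain ⟨e, he, he', hwe⟩ := hleaf _ hvw w (Sym2.mem_mk_right v w)
  have huv_ne : u ≠ v := hdiag _ huv
  have hvw_ne : v ≠ w := hdiag _ hvw
  have hux_ne : u ≠ x := hdiag _ hux
  have hC : {s(u, v), s(v, w), s(u, x)} = C := by
    refine Finset.eq_of_subset_of_card_le (by grind) (hcard.trans_eq ?_)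
    exact (Finset.card_eq_three.2 ⟨_, _, _, hvw'.symm, hux'.symm, by grind, rfl⟩).symm
  rw [← hC] at he
  obtain rfl : w = x := by grind
  exact ⟨u, v, w, huv_ne, hvw_ne, hux_ne, hC.symm⟩

variable [Fintype E] [DecidableEq F]

/-- The edges of a multigraph that leave the vertex set `S`. -/
def cut (dual : E → F × F) (S : Finset F) : Finset E :=
  {e | ¬((dual e).1 ∈ S ↔ (dual e).2 ∈ S)}

variable {dual : E → F × F}

@[simp]
theorem mem_cut {S : Finset F} {e : E} : e ∈ cut dual S ↔ ¬((dual e).1 ∈ S ↔ (dual e).2 ∈ S) := by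
  simp [cut]

theorem coboundary_indicator_apply_ne_zero {S : Finset F} {e : E} :
    coboundary dual (fun a => if a ∈ S then 1 else 0) e ≠ 0 ↔ e ∈ cut dual S := by
  rw [mem_cut, coboundary_apply]
  split_ifs with h₁ h₂ h₂ <;> simp [h₁, h₂, CharTwo.add_self_eq_zero]

theorem IsConnectedMultigraph.cut_nonempty [Fintype F] (h : IsConnectedMultigraph dual)
    {S : Finset F} (hS : S.Nonempty) (hS' : S ≠ Finset.univ) : (cut dual S).Nonempty := by
  obtain ⟨a, ha⟩ := hS
  obtain ⟨b, hb⟩ : ∃ b, b ∉ S := by simpa [Finset.eq_univ_iff_forall] using hS'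
  by_contra hempty
  have hzero : coboundary dual (fun a => if a ∈ S then 1 else 0) = 0 := funext fun e =>
    of_not_not fun he => hempty ⟨e, coboundary_indicator_apply_ne_zero.1 he⟩
  have := h _ hzero a b
  simp [ha, hb] at this

theorem card_filter_mem_cut_singleton_add_le [DecidableEq E] (S : Finset F) (e : E) :
    #{f ∈ S | e ∈ cut dual {f}} + (if e ∈ cut dual S then 1 else 0) ≤ 2 := by
  have hends : {f ∈ S | e ∈ cut dual {f}} ⊆ {(dual e).1, (dual e).2} := by
    intro f
    simp only [Finset.mem_filter, mem_cut, Finset.mem_singleton, Finset.mem_insert]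
    grind
  split_ifs with he
  · have hssub : {f ∈ S | e ∈ cut dual {f}} ⊂ {(dual e).1, (dual e).2} := by
      refine hends.ssubset_of_ne fun heq => mem_cut.1 he ?_
      have hsub : {(dual e).1, (dual e).2} ⊆ S := heq ▸ Finset.filter_subset _ _
      exact iff_of_true (hsub (by simp)) (hsub (by simp))
    exact (Finset.card_lt_card hssub).trans_le Finset.card_le_two
  · exact (Finset.card_le_card hends).trans Finset.card_le_two

theorem sum_card_cut_singleton_add_card_cut_le {S : Finset F} {A : Finset E}
    (hA : ∀ f ∈ S, cut dual {f} ⊆ A) :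
    ∑ f ∈ S, #(cut dual {f}) + #(cut dual S) ≤ 2 * #A := by
  classical
  have hcut : cut dual S ⊆ A := by
    intro e he
    by_cases h₁ : (dual e).1 ∈ S
    · exact hA _ h₁ (by grind [mem_cut])
    · exact hA _ (by grind [mem_cut] : (dual e).2 ∈ S) (by grind [mem_cut])
  have hsum : ∑ f ∈ S, #(cut dual {f}) = ∑ e ∈ A, #{f ∈ S | e ∈ cut dual {f}} := by
    rw [← Finset.sum_congr rfl fun f hf => congrArg Finset.card ((Finset.filter_mem_eq_inter).trans
      (Finset.inter_eq_right.2 (hA f hf)))]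
    exact Finset.sum_card_bipartiteAbove_eq_sum_card_bipartiteBelow fun f e => e ∈ cut dual {f}
  rw [hsum, ← Finset.inter_eq_right.2 hcut, ← Finset.filter_mem_eq_inter, Finset.card_filter,
    ← Finset.sum_add_distrib, mul_comm, ← smul_eq_mul]
  exact Finset.sum_le_card_nsmul _ _ _ fun e _ => card_filter_mem_cut_singleton_add_le S e

theorem mul_card_add_le_of_cut_subset {t : ℕ} (ht : 2 ≤ t) {S : Finset F} {A : Finset E}
    (hA : #A ≤ t) (hS : ∀ f ∈ S, cut dual {f} ⊆ A ∧ #(cut dual {f}) = 3)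
    (hcut : S.Nonempty → 3 ≤ #(cut dual S)) : 3 * t * #S + 3 * #A ≤ 2 * t * #A := by
  rcases S.eq_empty_or_nonempty with rfl | hne
  · rw [Finset.card_empty]
    nlinarith
  · have hcount := sum_card_cut_singleton_add_card_cut_le fun f hf => (hS f hf).1
    rw [Finset.sum_congr rfl fun f hf => (hS f hf).2, Finset.sum_const, smul_eq_mul] at hcount
    have := hcut hne
    nlinarith

theorem mul_card_triangular_add_le {t : ℕ} (ht : 2 ≤ t) {T : Finset F} {𝒜 : Finset (Finset E)}
    (hdisj : (𝒜 : Set (Finset E)).PairwiseDisjoint id) (hsize : ∀ A ∈ 𝒜, #A ≤ t)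
    (hT : ∀ f ∈ T, #(cut dual {f}) = 3 ∧ ∃ A ∈ 𝒜, cut dual {f} ⊆ A)
    (hcut : ∀ S ⊆ T, S.Nonempty → ∀ A ∈ 𝒜, (∀ f ∈ S, cut dual {f} ⊆ A) → 3 ≤ #(cut dual S)) :
    3 * t * #T + 3 * Fintype.card E ≤ 2 * t * Fintype.card E := by
  classical
  let S (A : Finset E) : Finset F := {f ∈ T | cut dual {f} ⊆ A}
  have hblock (A) (hA : A ∈ 𝒜) : 3 * t * #(S A) + 3 * #A ≤ 2 * t * #A :=
    mul_card_add_le_of_cut_subset ht (hsize A hA)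
      (fun f hf => ⟨(Finset.mem_filter.1 hf).2, (hT f (Finset.mem_filter.1 hf).1).1⟩)
      fun hne => hcut _ (Finset.filter_subset _ _) hne A hA fun f hf => (Finset.mem_filter.1 hf).2
  have hcover : #T ≤ ∑ A ∈ 𝒜, #(S A) := by
    refine (Finset.card_le_card fun f hf => ?_).trans Finset.card_biUnion_le
    obtain ⟨A, hA, hfA⟩ := (hT f hf).2
    exact Finset.mem_biUnion.2 ⟨A, hA, Finset.mem_filter.2 ⟨hf, hfA⟩⟩
  have hunion : ∑ A ∈ 𝒜, #A ≤ Fintype.card E :=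
    (Finset.card_biUnion hdisj).symm.trans_le (Finset.card_le_univ _)
  have hsum := Finset.sum_le_sum hblock
  rw [Finset.sum_add_distrib, ← Finset.mul_sum, ← Finset.mul_sum, ← Finset.mul_sum] at hsum
  obtain ⟨s, rfl⟩ := Nat.exists_eq_add_of_le ht
  nlinarith [Nat.mul_le_mul_left (3 * (2 + s)) hcover, Nat.mul_le_mul_left (1 + 2 * s) hunion]

theorem mul_card_add_le_of_three_le_card_cut [Fintype F] {t : ℕ} (ht : 3 ≤ t)
    (hE : t + 1 ≤ Fintype.card E)
    (hcut : ∀ S : Finset F, S.Nonempty → S ≠ Finset.univ → 3 ≤ #(cut dual S))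
    {𝒜 : Finset (Finset E)} (hdisj : (𝒜 : Set (Finset E)).PairwiseDisjoint id)
    (hsize : ∀ A ∈ 𝒜, #A ≤ t)
    (hcover : ∀ f, #(cut dual {f}) = 3 → ∃ A ∈ 𝒜, cut dual {f} ⊆ A) :
    12 * t * Fintype.card F + 3 * Fintype.card E ≤ 8 * t * Fintype.card E := by
  -- With so few faces `t < card E` is enough; otherwise no block contains all the face boundaries.
  by_cases hF : 3 * Fintype.card F ≤ 2 * t
  · nlinarith
  have hface (f : F) : 3 ≤ #(cut dual {f}) := by
    refine hcut {f} (Finset.singleton_nonempty f) fun h => ?_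
    have := congrArg Finset.card h
    rw [Finset.card_singleton, Finset.card_univ] at this
    lia
  let T : Finset F := {f | #(cut dual {f}) = 3}
  have hT : 3 * t * #T + 3 * Fintype.card E ≤ 2 * t * Fintype.card E := by
    refine mul_card_triangular_add_le (by lia) hdisj hsize
      (fun f hf => ⟨(Finset.mem_filter.1 hf).2, hcover f (Finset.mem_filter.1 hf).2⟩) ?_
    intro S _ hne A hA hSA
    refine hcut S hne ?_
    rintro rfl
    have hcount := sum_card_cut_singleton_add_card_cut_le hSA
    have := Finset.card_nsmul_le_sum Finset.univ _ _ fun f _ => hface f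
    have := hsize A hA
    rw [Finset.card_univ, smul_eq_mul] at *
    lia
  have hdegree : 4 * Fintype.card F ≤ 2 * Fintype.card E + #T := by
    have hcount := sum_card_cut_singleton_add_card_cut_le (dual := dual) (S := Finset.univ)
      fun f _ => Finset.subset_univ _
    have hsum : 4 * Fintype.card F ≤ ∑ f, #(cut dual {f}) + #T := by
      rw [Finset.card_filter, ← Finset.sum_add_distrib, mul_comm, ← smul_eq_mul]
      refine Finset.card_nsmul_le_sum _ _ _ fun f _ => ?_
      have := hface f
      split_ifs <;> lia
    rw [Finset.card_univ] at hcount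
    lia
  nlinarith

end Cut

section SimpleGraphDual

open scoped Finset

variable {V F : Type*} {G : SimpleGraph V} [Fintype G.edgeSet]
  {ends : G.edgeSet → V × V} {dual : G.edgeSet → F × F}

theorem IsDual.exists_cut_eq_triangle [DecidableEq V] [DecidableEq F]
    (hends : ∀ e, s((ends e).1, (ends e).2) = e.1) (hdual : IsDual ends dual) {S : Finset F}
    (hne : (cut dual S).Nonempty) (hcard : #(cut dual S) ≤ 3) :
    ∃ u v w, u ≠ v ∧ v ≠ w ∧ u ≠ w ∧
      (cut dual S).map (.subtype _) = {s(u, v), s(v, w), s(u, w)} := by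
  have hz : coboundary dual (fun a => if a ∈ S then 1 else 0) ∈ cycleSpace ends :=
    hdual ▸ LinearMap.mem_range_self _ _
  refine exists_eq_triangle_of_card_le_three ?_ ?_ (hne.map) (by rwa [Finset.card_map])
  · intro e he
    obtain ⟨e, -, rfl⟩ := Finset.mem_map.1 he
    exact G.not_isDiag_of_mem_edgeSet e.2
  · intro e he v hv
    obtain ⟨e, hcut, rfl⟩ := Finset.mem_map.1 he
    have hloop : (ends e).1 ≠ (ends e).2 := by
      have := G.not_isDiag_of_mem_edgeSet e.2
      rwa [← hends e, Sym2.mk_isDiag_iff] at this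
    obtain ⟨e', hne', he', hv'⟩ := exists_ne_of_mem_cycleSpace hz
      (coboundary_indicator_apply_ne_zero.2 hcut) hloop (by rwa [hends e])
    exact ⟨e', Finset.mem_map_of_mem _ (coboundary_indicator_apply_ne_zero.1 he'),
      Subtype.coe_ne_coe.2 hne', hends e' ▸ hv'⟩

theorem IsDual.three_le_card_cut [DecidableEq F] (hends : ∀ e, s((ends e).1, (ends e).2) = e.1)
    (hdual : IsDual ends dual) {S : Finset F} (hne : (cut dual S).Nonempty) :
    3 ≤ #(cut dual S) := by
  classical
  by_contra! hlt
  obtain ⟨u, v, w, huv, hvw, huw, hC⟩ := hdual.exists_cut_eq_triangle hends hne (by lia)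
  have hthree : #{s(u, v), s(v, w), s(u, w)} = 3 :=
    Finset.card_eq_three.2 ⟨_, _, _, by grind, by grind, by grind, rfl⟩
  rw [← hC, Finset.card_map] at hthree
  lia

theorem IsDual.exists_cut_subset_edgeSet [DecidableEq F] {ι : Type*} {H : ι → SimpleGraph V}
    (hcover : ∀ u v w : V, G.Adj u v → G.Adj v w → G.Adj u w →
      ∃ i, (H i).Adj u v ∧ (H i).Adj v w ∧ (H i).Adj u w)
    (hends : ∀ e, s((ends e).1, (ends e).2) = e.1) (hdual : IsDual ends dual) {S : Finset F}
    (hcard : #(cut dual S) = 3) : ∃ i, ∀ e ∈ cut dual S, e.1 ∈ (H i).edgeSet := by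
  classical
  obtain ⟨u, v, w, -, -, -, hC⟩ :=
    hdual.exists_cut_eq_triangle hends (Finset.card_pos.1 (by lia)) hcard.le
  have hadj {e : Sym2 V} (he : e ∈ ({s(u, v), s(v, w), s(u, w)} : Finset (Sym2 V))) :
      e ∈ G.edgeSet := by
    rw [← hC] at he
    obtain ⟨e, -, rfl⟩ := Finset.mem_map.1 he
    exact e.2
  obtain ⟨i, huv, hvw, huw⟩ := hcover u v w (hadj (e := s(u, v)) (by simp))
    (hadj (e := s(v, w)) (by simp)) (hadj (e := s(u, w)) (by simp))
  refine ⟨i, fun e he => ?_⟩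
  have heC : e.1 ∈ ({s(u, v), s(v, w), s(u, w)} : Finset (Sym2 V)) :=
    hC ▸ Finset.mem_map_of_mem _ he
  simp only [Finset.mem_insert, Finset.mem_singleton] at heC
  rcases heC with h | h | h <;> rw [h] <;> assumption

theorem IsDual.mul_card_add_le [Fintype F] (hends : ∀ e, s((ends e).1, (ends e).2) = e.1)
    (hdual : IsDual ends dual) (hconn : IsConnectedMultigraph dual) {t : ℕ} (ht : 3 ≤ t)
    (hE : t + 1 ≤ Fintype.card G.edgeSet) {ι : Type*} {H : ι → SimpleGraph V}
    (hcover : ∀ u v w : V, G.Adj u v → G.Adj v w → G.Adj u w →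
      ∃ i, (H i).Adj u v ∧ (H i).Adj v w ∧ (H i).Adj u w)
    (hdisj : ∀ i j : ι, i ≠ j → Disjoint (H i).edgeSet (H j).edgeSet)
    (hfin : ∀ i, (H i).edgeSet.Finite) (hsize : ∀ i, Nat.card (H i).edgeSet ≤ t) :
    12 * t * Fintype.card F + 3 * Fintype.card G.edgeSet ≤ 8 * t * Fintype.card G.edgeSet := by
  classical
  let block (i : ι) : Finset G.edgeSet := {e | e.1 ∈ (H i).edgeSet}
  have hblock (i : ι) : #(block i) ≤ t := by
    refine le_trans ?_ (hsize i)
    rw [← Finset.card_map (.subtype _), ← Set.ncard_coe_finset, Nat.card_coe_set_eq]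
    refine Set.ncard_le_ncard ?_ (hfin i)
    intro e he
    obtain ⟨e, hblock, rfl⟩ := Finset.mem_map.1 he
    exact (Finset.mem_filter.1 hblock).2
  refine mul_card_add_le_of_three_le_card_cut ht hE
    (fun S hS hS' => hdual.three_le_card_cut hends (hconn.cut_nonempty hS hS'))
    (𝒜 := (Set.range block).toFinset) ?_ ?_ ?_
  · rw [Set.coe_toFinset]
    rintro _ ⟨i, rfl⟩ _ ⟨j, rfl⟩ hne
    refine Finset.disjoint_left.2 fun e hi hj => ?_
    exact (hdisj i j fun h => hne (congrArg block h)).le_bot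
      ⟨(Finset.mem_filter.1 hi).2, (Finset.mem_filter.1 hj).2⟩
  · simpa using hblock
  · intro f hf
    obtain ⟨i, hi⟩ := hdual.exists_cut_subset_edgeSet hcover hends hf
    exact ⟨block i, by simp, fun e he => Finset.mem_filter.2 ⟨Finset.mem_univ e, hi e he⟩⟩

end SimpleGraphDual

theorem planar_edge_upper_bound_general (t : ℕ) (ht : 3 ≤ t) {V : Type*} [Fintype V]
    (G : SimpleGraph V) (hplanar : IsPlanar G) (hedges : t + 1 ≤ Nat.card G.edgeSet)
    {ι : Type*} (H : ι → SimpleGraph V)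
    (hcover : ∀ u v w : V, G.Adj u v → G.Adj v w → G.Adj u w →
      ∃ i, (H i).Adj u v ∧ (H i).Adj v w ∧ (H i).Adj u w)
    (hdisj : ∀ i j : ι, i ≠ j → Disjoint (H i).edgeSet (H j).edgeSet)
    (hsize : ∀ i, Nat.card (H i).edgeSet ≤ t) :
    (Nat.card G.edgeSet : ℝ) ≤ (12 * t / (4 * t + 3)) * ((Fintype.card V : ℝ) - 2) := by
  classical
  obtain ⟨F, _, _, ends, dual, hends, hdual, hconn⟩ := hplanar.exists_isDual
  have := Fintype.ofFinite F
  obtain ⟨e⟩ : Nonempty G.edgeSet := (Nat.card_pos_iff.1 (by lia)).1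
  have : Nonempty V := ⟨(ends e).1⟩
  rw [Nat.card_eq_fintype_card] at hedges ⊢
  have heuler : (Fintype.card G.edgeSet + 2 : ℝ) ≤ Fintype.card V + Fintype.card F := by
    exact_mod_cast hdual.card_add_two_le
  have hfaces : (12 * t * Fintype.card F + 3 * Fintype.card G.edgeSet : ℝ) ≤
      8 * t * Fintype.card G.edgeSet := by
    exact_mod_cast hdual.mul_card_add_le hends hconn ht hedges hcover hdisj
      (fun i => Set.toFinite _) hsize
  rw [div_mul_eq_mul_div, le_div_iff₀ (by positivity)]
  linarith [mul_le_mul_of_nonneg_left heuler (by positivity : (0 : ℝ) ≤ 12 * t)]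

/-- **Lemma (planar edge upper bound).** Let `t ≥ 3` and let `G` be a simple planar
graph with at least `t+1` edges. Suppose the subgraph of `G` induced by its triangles
decomposes as an edge-disjoint union of subgraphs `H i`, each containing between `3`
and `t` edges, such that every triangle of `G` lies in some `H i`. Then
`e(G) ≤ (12t/(4t+3)) · (v(G) - 2)`. -/
theorem planar_edge_upper_bound (t : ℕ) (ht : 3 ≤ t) {V : Type*} [Fintype V]
    (G : SimpleGraph V) (hplanar : IsPlanar G)
    (hedges : t + 1 ≤ Nat.card G.edgeSet)
    {ι : Type*} (H : ι → SimpleGraph V)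
    (hle : ∀ i, H i ≤ G)
    (hcover : ∀ u v w : V, G.Adj u v → G.Adj v w → G.Adj u w →
      ∃ i, (H i).Adj u v ∧ (H i).Adj v w ∧ (H i).Adj u w)
    (hsub : ∀ (i : ι) (u v : V), (H i).Adj u v → ∃ w, G.Adj u w ∧ G.Adj v w)
    (hdisj : ∀ i j : ι, i ≠ j → Disjoint (H i).edgeSet (H j).edgeSet)
    (hsize : ∀ i, 3 ≤ Nat.card (H i).edgeSet ∧ Nat.card (H i).edgeSet ≤ t) :
    (Nat.card G.edgeSet : ℝ) ≤ (12 * t / (4 * t + 3)) * ((Fintype.card V : ℝ) - 2) :=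
  planar_edge_upper_bound_general t ht G hplanar hedges H hcover hdisj fun i => (hsize i).2
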